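/- arXiv:1511.03322 — 2 statements merged into one kernel-verified Lean document; each statement's English description precedes it below -/
import Mathlib

section
/- Let H be a primitive, aperiodic and marked substitution over a finite alphabet A. Then there exists an integer l(H) > 0 such that every word z ∈ L_H with |z| > l(H) admits a unique decomposition z = S·H(x)·P, where x ∈ L_H is a finite word, S is a suffix of H(s) with |S| < |H(s)| for some letter s (S possibly empty), P is a prefix of H(p) with |P| < |H(p)| for some letter p (P possibly empty), and the word s·x·p belongs to L_H; uniqueness means the triple (S, x, P) is unique. -/
open Filter Topology MeasureTheory

variable {A : Type*}

/-- The shift map on infinite words. -/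
def shift (x : ℕ → A) : ℕ → A := fun n => x (n + 1)

/-- Image of a finite word under a substitution. -/
def wordMap (H : A → List A) (w : List A) : List A := w.flatMap H

/-- Image of an infinite word under a substitution (each `H a` nonempty makes this the
infinite concatenation `H(x₀)H(x₁)⋯`). -/
def substSeq (H : A → List A) (x : ℕ → A) : ℕ → A :=
  fun n => (wordMap H ((List.range (n + 1)).map x)).getD n (x 0)

/-- The prefix of length `n` of an infinite word. -/
def prefixWord (x : ℕ → A) (n : ℕ) : List A := (List.range n).map x

/-- The factor of length `n` at position `i` of an infinite word. -/
def factorAt (x : ℕ → A) (i n : ℕ) : List A := (List.range n).map fun j => x (i + j)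

/-- The language of an infinite word: the set of its finite factors. -/
def Lang (u : ℕ → A) : Set (List A) := {w | ∃ i, w = factorAt u i w.length}

/-- A sequence is (purely) periodic for the shift. -/
def PeriodicSeq (x : ℕ → A) : Prop := ∃ m, 0 < m ∧ ∀ n, x (n + m) = x n

/-- `u` is a fixed point of the substitution `H`. -/
def IsFixedPointSubst (H : A → List A) (u : ℕ → A) : Prop := substSeq H u = u

/-- `H` is primitive: some power of `H` maps every letter onto a word containing
every letter. -/
def PrimitiveSubst (H : A → List A) : Prop :=
  ∃ k, 0 < k ∧ ∀ a b : A, b ∈ (wordMap H)^[k] [a]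

/-- `H` is aperiodic: no fixed point of `H` is periodic for the shift. -/
def AperiodicSubst (H : A → List A) : Prop :=
  ∀ u : ℕ → A, IsFixedPointSubst H u → ¬ PeriodicSeq u

/-- `H` is marked: first letters of images are pairwise distinct, and so are last letters. -/
def MarkedSubst (H : A → List A) (hne : ∀ a, H a ≠ []) : Prop :=
  Function.Injective (fun a => (H a).head (hne a)) ∧
  Function.Injective (fun a => (H a).getLast (hne a))

/-- `H` is 2-full (with respect to the fixed point `u`): every word of length 2 belongs
to the language. -/
def TwoFull (H : A → List A) (u : ℕ → A) : Prop :=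
  ∀ w : List A, w.length = 2 → w ∈ Lang u

/-- The attractor `K`: closure of the shift-orbit of the fixed point `u`. -/
def orbitClosure [TopologicalSpace A] (u : ℕ → A) : Set (ℕ → A) :=
  closure {y | ∃ n, y = shift^[n] u}

/-- `δ(x)`: the length of the maximal prefix of `x` belonging to the language of `u`. -/
noncomputable def delta (u x : ℕ → A) : ℕ := sSup {n | prefixWord x n ∈ Lang u}

/-- The renormalization operator `R`. -/
noncomputable def renorm (H : A → List A) (V : (ℕ → A) → ℝ) : (ℕ → A) → ℝ :=
  fun x => ∑ i ∈ Finset.range (H (x 0)).length, V (shift^[i] (substSeq H x))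

/-- `t_n(x) = |H^n(x₀)|`. -/
def tlen (H : A → List A) (n : ℕ) (x : ℕ → A) : ℕ := ((wordMap H)^[n] [x 0]).length

/-- An accident occurs at time `b`. -/
def AccidentAt (u x : ℕ → A) (b : ℕ) : Prop :=
  0 < b ∧ delta u x - b < delta u (shift^[b] x) ∧
    ∀ i < b, delta u (shift^[i] x) = delta u x - i

/-- The first accident time of `x` (junk value `0` if there is none). -/
noncomputable def firstAccident (u x : ℕ → A) : ℕ := sInf {b | AccidentAt u x b}

/-- The `j`-th accident time `B_j` of `x`, defined inductively. -/
noncomputable def accidentTime (u x : ℕ → A) : ℕ → ℕ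
  | 0 => 0
  | j + 1 => accidentTime u x j + firstAccident u (shift^[accidentTime u x j] x)

/-- The set of (genuine) accident times of `x`. -/
def AccidentSet (u x : ℕ → A) : Set ℕ :=
  {B | ∃ j : ℕ, B = accidentTime u x (j + 1) ∧
        AccidentAt u (shift^[accidentTime u x j] x)
          (firstAccident u (shift^[accidentTime u x j] x))}

/-- A word is right special. -/
def RightSpecial (u : ℕ → A) (w : List A) : Prop :=
  ∃ b c : A, b ≠ c ∧ w ++ [b] ∈ Lang u ∧ w ++ [c] ∈ Lang u

/-- A word is left special. -/
def LeftSpecial (u : ℕ → A) (w : List A) : Prop :=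
  ∃ a b : A, a ≠ b ∧ a :: w ∈ Lang u ∧ b :: w ∈ Lang u

/-- A word is bispecial. -/
def Bispecial (u : ℕ → A) (w : List A) : Prop := RightSpecial u w ∧ LeftSpecial u w

/-- `l` is a recognizability constant for `H`: every long enough word of the language
admits a unique desubstitution. -/
def RecogBound (H : A → List A) (u : ℕ → A) (l : ℕ) : Prop :=
  ∀ z ∈ Lang u, l < z.length →
    ∃! d : List A × List A × List A,
      ∃ s p : A,
        z = d.1 ++ wordMap H d.2.1 ++ d.2.2 ∧
        d.2.1 ∈ Lang u ∧
        d.1 <:+ H s ∧ d.1.length < (H s).length ∧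
        d.2.2 <+: H p ∧ d.2.2.length < (H p).length ∧
        ([s] ++ d.2.1 ++ [p]) ∈ Lang u

/-- The incidence matrix of a substitution, with real entries. -/
def incMat [Fintype A] [DecidableEq A] (H : A → List A) : Matrix A A ℝ :=
  fun a b => ((H a).count b : ℝ)

/-- `lam` is the Perron–Frobenius eigenvalue of the incidence matrix of the (primitive)
substitution `H`: it admits an entrywise positive eigenvector. -/
def IsPerronValue [Fintype A] [DecidableEq A] (H : A → List A) (lam : ℝ) : Prop :=
  ∃ v : A → ℝ, (∀ a, 0 < v a) ∧ (incMat H).mulVec v = lam • v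

/-- Concatenation of a finite word with an infinite word. -/
def catWord (S : List A) (y : ℕ → A) : ℕ → A :=
  fun n => S.getD n (y (n - S.length))

/-!
If two desubstitutions of `z` start with blocks of different lengths, their cuttings of `z` never
meet again, because the images of the letters form a suffix code. One cutting then always overhangs
the other by one of finitely many words, and since the images start with distinct letters, the
current overhang determines the next one. The sequence of overhangs, hence `z` itself up to a
bounded prefix, is therefore periodic with a bounded period. A uniformly recurrent sequence that is
not periodic has only short factors with a given period, so `z` is short.
-/

section Words

variable {H : A → List A}

lemma wordMap_cons (H : A → List A) (a : A) (w : List A) :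
    wordMap H (a :: w) = H a ++ wordMap H w :=
  List.flatMap_cons

lemma wordMap_append (H : A → List A) (v w : List A) :
    wordMap H (v ++ w) = wordMap H v ++ wordMap H w :=
  List.flatMap_append

lemma wordMap_infix (H : A → List A) {v w : List A} (h : v <:+: w) :
    wordMap H v <:+: wordMap H w :=
  h.flatMap H

lemma wordMap_reverse (H : A → List A) (w : List A) :
    wordMap (fun a => (H a).reverse) w.reverse = (wordMap H w).reverse :=
  List.reverse_flatMap.symm

lemma mul_length_le_length_wordMap {m : ℕ} (hm : ∀ a, m ≤ (H a).length) (w : List A) :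
    m * w.length ≤ (wordMap H w).length := by
  induction w with
  | nil => simp
  | cons a w ih =>
    rw [wordMap_cons, List.length_append, List.length_cons, Nat.mul_succ, Nat.add_comm]
    exact Nat.add_le_add (hm a) ih

lemma length_le_length_wordMap (hne : ∀ a, H a ≠ []) (w : List A) :
    w.length ≤ (wordMap H w).length := by
  have h := mul_length_le_length_wordMap (m := 1) (fun a => List.length_pos_iff.2 (hne a)) w
  rwa [one_mul] at h

lemma exists_length_le [Finite A] (H : A → List A) : ∃ M, ∀ a, (H a).length ≤ M := by
  obtain ⟨M, hM⟩ := (Set.finite_range fun a => (H a).length).bddAbove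
  exact ⟨M, fun a => hM ⟨a, rfl⟩⟩

end Words

section Codes

variable {H : A → List A}

/-- The images of the letters under `H` form a prefix code, with distinct letters having
distinct images. -/
def IsPrefixCode (H : A → List A) : Prop := ∀ ⦃a b⦄, H a <+: H b → a = b

/-- The images of the letters under `H` form a suffix code, with distinct letters having
distinct images. -/
def IsSuffixCode (H : A → List A) : Prop := ∀ ⦃a b⦄, H a <:+ H b → a = b

lemma isPrefixCode_of_injective_head? (hne : ∀ a, H a ≠ [])
    (hhead : Function.Injective fun a => (H a).head?) : IsPrefixCode H := by
  rintro a b ⟨t, ht⟩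
  apply hhead
  simp only [← ht, List.head?_append_of_ne_nil _ (hne a)]

lemma isPrefixCode_reverse_iff : (IsPrefixCode fun a => (H a).reverse) ↔ IsSuffixCode H :=
  ⟨fun hcode _ _ h => hcode (List.reverse_prefix.2 h),
    fun hcode _ _ h => hcode (List.reverse_prefix.1 h)⟩

lemma MarkedSubst.injective_head? {hne : ∀ a, H a ≠ []} (hmarked : MarkedSubst H hne) :
    Function.Injective fun a => (H a).head? := by
  intro a b h
  apply hmarked.1
  simpa only [List.head?_eq_some_head (hne _), Option.some.injEq] using h

lemma MarkedSubst.isSuffixCode {hne : ∀ a, H a ≠ []} (hmarked : MarkedSubst H hne) :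
    IsSuffixCode H := by
  refine isPrefixCode_reverse_iff.1 (isPrefixCode_of_injective_head?
    (fun a => List.reverse_ne_nil_iff.2 (hne a)) fun a b h => hmarked.2 ?_)
  simpa only [List.head?_reverse, List.getLast?_eq_some_getLast (hne _), Option.some.injEq] using h

lemma IsPrefixCode.not_prefix (hcode : IsPrefixCode H) {P : List A} {p : A} (hP : P <+: H p)
    (hlt : P.length < (H p).length) (a : A) : ¬ H a <+: P := by
  intro h
  obtain rfl := hcode (h.trans hP)
  exact hlt.not_ge h.length_le

lemma IsPrefixCode.eq_of_wordMap_append_eq (hcode : IsPrefixCode H) {x y P Q : List A} {p q : A}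
    (h : wordMap H x ++ P = wordMap H y ++ Q) (hP : P <+: H p) (hPlt : P.length < (H p).length)
    (hQ : Q <+: H q) (hQlt : Q.length < (H q).length) : x = y ∧ P = Q := by
  induction x generalizing y with
  | nil =>
    cases y with
    | nil => exact ⟨rfl, h⟩
    | cons b y =>
      refine (hcode.not_prefix hP hPlt b ⟨wordMap H y ++ Q, ?_⟩).elim
      rw [← List.append_assoc, ← wordMap_cons, ← h]
      rfl
  | cons a x ih =>
    cases y with
    | nil =>
      refine (hcode.not_prefix hQ hQlt a ⟨wordMap H x ++ P, ?_⟩).elim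
      rw [← List.append_assoc, ← wordMap_cons, h]
      rfl
    | cons b y =>
      simp only [wordMap_cons, List.append_assoc] at h
      obtain rfl : a = b :=
        (List.prefix_or_prefix_of_prefix (List.prefix_append _ _)
          ⟨_, h.symm⟩).elim (fun hab => hcode hab) fun hba => (hcode hba).symm
      obtain ⟨rfl, hPQ⟩ := ih (List.append_cancel_left h)
      exact ⟨rfl, hPQ⟩

lemma IsSuffixCode.eq_of_append_wordMap_eq (hcode : IsSuffixCode H) {x y S T : List A} {s t : A}
    (h : S ++ wordMap H x = T ++ wordMap H y) (hS : S <:+ H s) (hSlt : S.length < (H s).length)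
    (hT : T <:+ H t) (hTlt : T.length < (H t).length) : S = T ∧ x = y := by
  have hrev := congrArg List.reverse h
  simp only [List.reverse_append, ← wordMap_reverse] at hrev
  obtain ⟨hxy, hST⟩ := (isPrefixCode_reverse_iff.2 hcode).eq_of_wordMap_append_eq hrev
    (List.reverse_prefix.2 hS) (by simpa only [List.length_reverse] using hSlt)
    (List.reverse_prefix.2 hT) (by simpa only [List.length_reverse] using hTlt)
  exact ⟨List.reverse_injective hST, List.reverse_injective hxy⟩

end Codes

section Desubstitution

variable {H : A → List A}

/-- `z = S·H(x)·P` is a desubstitution of `z` with border letters `s` and `p`: `S` is a proper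
suffix of `H(s)` and `P` a proper prefix of `H(p)`. -/
structure IsDesubstitution (H : A → List A) (s p : A) (z S x P : List A) : Prop where
  eq_append : z = S ++ wordMap H x ++ P
  left_suffix : S <:+ H s
  left_lt : S.length < (H s).length
  right_prefix : P <+: H p
  right_lt : P.length < (H p).length

lemma exists_eq_wordMap_append {X U V : List A} (h : wordMap H X = U ++ V) (hV : V ≠ []) :
    ∃ x p y P, X = x ++ p :: y ∧ U = wordMap H x ++ P ∧ P <+: H p ∧
      P.length < (H p).length := by
  induction X generalizing U with
  | nil => exact (hV (List.append_eq_nil_iff.1 h.symm).2).elim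
  | cons a X ih =>
    rw [wordMap_cons] at h
    have hUpre : U <+: H a ++ wordMap H X := h ▸ List.prefix_append U V
    rcases lt_or_ge U.length (H a).length with hlt | hge
    · exact ⟨[], a, X, U, rfl, rfl,
        List.prefix_of_prefix_length_le hUpre (List.prefix_append _ _) hlt.le, hlt⟩
    · obtain ⟨U', rfl⟩ := List.prefix_of_prefix_length_le (List.prefix_append _ _) hUpre hge
      rw [List.append_assoc] at h
      obtain ⟨x, p, y, P, rfl, rfl, hP, hlt⟩ := ih (List.append_cancel_left h)
      exact ⟨a :: x, p, y, P, rfl, by rw [wordMap_cons, List.append_assoc], hP, hlt⟩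

lemma exists_eq_append_wordMap {X U V : List A} (h : wordMap H X = U ++ V) (hU : U ≠ []) :
    ∃ y s x S, X = y ++ s :: x ∧ V = S ++ wordMap H x ∧ S <:+ H s ∧
      S.length < (H s).length := by
  have hrev := congrArg List.reverse h
  rw [List.reverse_append, ← wordMap_reverse] at hrev
  obtain ⟨x, s, y, S, hX, hV, hS, hlt⟩ :=
    exists_eq_wordMap_append hrev (List.reverse_ne_nil_iff.2 hU)
  refine ⟨y.reverse, s, x.reverse, S.reverse, ?_, ?_, ?_, ?_⟩
  · simpa using congrArg List.reverse hX
  · simpa [← wordMap_reverse] using congrArg List.reverse hV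
  · simpa using List.reverse_suffix.2 hS
  · simpa using hlt

lemma exists_isDesubstitution_of_wordMap_eq {X l z r : List A}
    (h : wordMap H X = l ++ z ++ r) (hl : l ≠ []) (hr : r ≠ [])
    (hz : ∀ a, (H a).length ≤ z.length) :
    ∃ s p S x P, IsDesubstitution H s p z S x P ∧ [s] ++ x ++ [p] <:+: X := by
  obtain ⟨x₁, p, x₂, P, rfl, hP, hPpre, hPlt⟩ := exists_eq_wordMap_append h hr
  have hlpre : l <+: wordMap H x₁ := by
    refine List.prefix_of_prefix_length_le (l₃ := l ++ z) (List.prefix_append _ _)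
      (hP ▸ List.prefix_append _ _) ?_
    have hlen := congrArg List.length hP
    have hzp := hz p
    simp only [List.length_append] at hlen
    omega
  obtain ⟨z₁, hz₁⟩ := hlpre
  rw [← hz₁, List.append_assoc] at hP
  obtain ⟨y, s, x, S, rfl, rfl, hSsuf, hSlt⟩ := exists_eq_append_wordMap hz₁.symm hl
  exact ⟨s, p, S, x, P, ⟨List.append_cancel_left hP, hSsuf, hSlt, hPpre, hPlt⟩, y, x₂, by simp⟩

end Desubstitution

section Staggered

variable {H : A → List A} {w Y Z : List A}

/-- `w` is the part by which one cutting of a word into blocks `H(a)` overhangs another one that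
never meets it again: a suffix of some `H(s)` such that `w·H(y)` is never an `H(x)`. -/
structure IsOverhang (H : A → List A) (w : List A) : Prop where
  suffix : ∃ s, w <:+ H s
  ne_wordMap : ∀ x y, wordMap H x ≠ w ++ wordMap H y

/-- `Z` can be cut into blocks `H(a)` both from its beginning and after the overhang `w`, the last
block being possibly incomplete in either cutting. -/
def Staggered (H : A → List A) (w Z : List A) : Prop :=
  ∃ x y, Z <+: wordMap H x ∧ Z <+: w ++ wordMap H y

lemma IsOverhang.ne_nil (hw : IsOverhang H w) : w ≠ [] :=
  fun h => hw.ne_wordMap [] [] (by rw [h, List.nil_append])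

lemma IsOverhang.of_append {b : A} {v : List A} (hw : IsOverhang H (H b ++ v)) :
    IsOverhang H v where
  suffix := hw.suffix.imp fun _ h => (List.suffix_append _ _).trans h
  ne_wordMap x y h := hw.ne_wordMap (b :: x) y (by rw [wordMap_cons, h, List.append_assoc])

lemma IsOverhang.of_eq_append {b : A} {v : List A} (hw : IsOverhang H w) (hb : H b = w ++ v) :
    IsOverhang H v where
  suffix := ⟨b, hb ▸ List.suffix_append _ _⟩
  ne_wordMap x y h := hw.ne_wordMap (b :: y) x (by rw [wordMap_cons, hb, h, List.append_assoc])

lemma finite_setOf_isOverhang [Finite A] (H : A → List A) : {w | IsOverhang H w}.Finite := by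
  refine (Set.finite_iUnion fun s => (H s).tails.finite_toSet).subset fun w hw => ?_
  simpa only [Set.mem_iUnion, Set.mem_ofPred_eq, List.mem_tails] using hw.suffix

lemma exists_cons_of_prefix_wordMap (hne : ∀ a, H a ≠ []) {f x : List A} (hf : f ≠ [])
    (h : f <+: wordMap H x) : ∃ a x', x = a :: x' ∧ (H a).head? = f.head? := by
  obtain ⟨t, ht⟩ := h
  cases x with
  | nil => exact (hf (List.append_eq_nil_iff.1 ht).1).elim
  | cons a x' =>
    refine ⟨a, x', rfl, ?_⟩
    rw [← List.head?_append_of_ne_nil f hf (l₂ := t), ht, wordMap_cons,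
      List.head?_append_of_ne_nil _ (hne a)]

lemma Staggered.prefix_or_exists_of_append (hne : ∀ a, H a ≠ [])
    (hhead : Function.Injective fun a => (H a).head?) {b : A} {v : List A}
    (hZ : Staggered H (H b ++ v) Z) :
    Z <+: H b ∨ ∃ Z', Z = H b ++ Z' ∧ Staggered H v Z' := by
  obtain ⟨x, y, hx, hy⟩ := hZ
  rw [List.append_assoc] at hy
  refine (List.prefix_or_prefix_of_prefix hy (List.prefix_append _ _)).imp_right ?_
  rintro ⟨Z', rfl⟩
  obtain ⟨a, x', rfl, ha⟩ :=
    exists_cons_of_prefix_wordMap hne (hne b) ((List.prefix_append _ _).trans hx)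
  obtain rfl := hhead ha
  exact ⟨Z', rfl, x', y, (List.prefix_append_right_inj _).1 hx,
    (List.prefix_append_right_inj _).1 hy⟩

lemma Staggered.prefix_or_exists_of_eq_append (hne : ∀ a, H a ≠ [])
    (hhead : Function.Injective fun a => (H a).head?) {b : A} {v : List A} (hw : w ≠ [])
    (hb : H b = w ++ v) (hZ : Staggered H w Z) :
    Z <+: w ∨ ∃ Z', Z = w ++ Z' ∧ Staggered H v Z' := by
  obtain ⟨x, y, hx, hy⟩ := hZ
  refine (List.prefix_or_prefix_of_prefix hy (List.prefix_append _ _)).imp_right ?_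
  rintro ⟨Z', rfl⟩
  obtain ⟨a, x', rfl, ha⟩ :=
    exists_cons_of_prefix_wordMap hne hw ((List.prefix_append _ _).trans hx)
  obtain rfl : a = b := hhead (by simp only [ha, hb, List.head?_append_of_ne_nil _ hw])
  rw [wordMap_cons, hb, List.append_assoc] at hx
  exact ⟨Z', rfl, y, x', (List.prefix_append_right_inj _).1 hy,
    (List.prefix_append_right_inj _).1 hx⟩

lemma Staggered.prefix_overhang (hne : ∀ a, H a ≠ []) (hw : w ≠ [])
    (hshort : ∀ b, ¬ H b <+: w) (hlong : ∀ b, ¬ w <+: H b) (hZ : Staggered H w Z) : Z <+: w := by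
  obtain ⟨x, y, hx, hy⟩ := hZ
  refine (List.prefix_or_prefix_of_prefix hy (List.prefix_append _ _)).resolve_right fun hwZ => ?_
  obtain ⟨a, x', rfl, -⟩ := exists_cons_of_prefix_wordMap hne hw (hwZ.trans hx)
  rw [wordMap_cons] at hx
  exact (List.prefix_or_prefix_of_prefix (hwZ.trans hx) (List.prefix_append _ _)).elim
    (hlong a) (hshort a)

-- The first letter of `w` determines the next block of the other cutting, so that neither `e` nor
-- `w'` depends on `Z`.
lemma IsOverhang.exists_step (hne : ∀ a, H a ≠ [])
    (hhead : Function.Injective fun a => (H a).head?) (hw : IsOverhang H w) :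
    ∃ e w', e ≠ [] ∧ e <+: w ∧ IsOverhang H w' ∧
      ∀ Z, Staggered H w Z → Z <+: e ∨ ∃ Z', Z = e ++ Z' ∧ Staggered H w' Z' := by
  by_cases hshort : ∃ b, H b <+: w
  · obtain ⟨b, v, rfl⟩ := hshort
    exact ⟨H b, v, hne b, List.prefix_append _ _, hw.of_append,
      fun Z hZ => hZ.prefix_or_exists_of_append hne hhead⟩
  by_cases hlong : ∃ b, w <+: H b
  · obtain ⟨b, v, hb⟩ := hlong
    exact ⟨w, v, hw.ne_nil, List.prefix_rfl, hw.of_eq_append hb.symm,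
      fun Z hZ => hZ.prefix_or_exists_of_eq_append hne hhead hw.ne_nil hb.symm⟩
  · push Not at hshort hlong
    exact ⟨w, w, hw.ne_nil, List.prefix_rfl, hw,
      fun Z hZ => Or.inl (hZ.prefix_overhang hne hw.ne_nil hshort hlong)⟩

lemma Staggered.prefix_or_prefix (hne : ∀ a, H a ≠ [])
    (hhead : Function.Injective fun a => (H a).head?) (hw : IsOverhang H w)
    (hY : Staggered H w Y) (hZ : Staggered H w Z) : Y <+: Z ∨ Z <+: Y := by
  induction hn : Y.length using Nat.strong_induction_on generalizing w Y Z with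
  | _ n ih =>
    obtain ⟨e, w', he, -, hw', hstep⟩ := hw.exists_step hne hhead
    rcases hstep Y hY with hYe | ⟨Y', rfl, hY'⟩ <;> rcases hstep Z hZ with hZe | ⟨Z', rfl, hZ'⟩
    · exact List.prefix_or_prefix_of_prefix hYe hZe
    · exact Or.inl (hYe.trans (List.prefix_append _ _))
    · exact Or.inr (hZe.trans (List.prefix_append _ _))
    · simp only [List.prefix_append_right_inj]
      have := List.length_pos_iff.2 he
      rw [List.length_append] at hn
      exact ih Y'.length (by omega) hw' hY' hZ' rfl

lemma Staggered.exists_drop (hne : ∀ a, H a ≠ [])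
    (hhead : Function.Injective fun a => (H a).head?) {M : ℕ} (hM : ∀ a, (H a).length ≤ M)
    (hw : IsOverhang H w) (hZ : Staggered H w Z) (n : ℕ) (hn : n + M ≤ Z.length) :
    ∃ c v, n ≤ c ∧ c < n + M ∧ IsOverhang H v ∧ Staggered H v (Z.drop c) := by
  have hlen {v : List A} (hv : IsOverhang H v) : v.length ≤ M :=
    hv.suffix.elim fun s hs => hs.length_le.trans (hM s)
  induction n with
  | zero =>
    have := List.length_pos_iff.2 hw.ne_nil
    have := hlen hw
    exact ⟨0, w, le_rfl, by omega, hw, hZ⟩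
  | succ n ih =>
    obtain ⟨c, v, hnc, hcn, hv, hc⟩ := ih (by omega)
    rcases hnc.lt_or_eq with hlt | rfl
    · exact ⟨c, v, hlt, by omega, hv, hc⟩
    obtain ⟨e, v', he, hev, hv', hstep⟩ := hv.exists_step hne hhead
    have hepos := List.length_pos_iff.2 he
    have heM := hev.length_le.trans (hlen hv)
    rcases hstep _ hc with hshort | ⟨Z', hZ', hstag⟩
    · have := hshort.length_le
      rw [List.length_drop] at this
      omega
    · refine ⟨n + e.length, v', by omega, by omega, hv', ?_⟩
      rwa [← List.drop_drop, hZ', List.drop_left]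

lemma hasPeriod_of_drop_prefix {v : List A} {p : ℕ} (h : v.drop p <+: v) : v.HasPeriod p := by
  rwa [← List.prefix_append_right_inj (v.take p), List.take_append_drop] at h

lemma exists_hasPeriod_drop_of_staggered [Finite A] (hne : ∀ a, H a ≠ [])
    (hhead : Function.Injective fun a => (H a).head?) :
    ∃ L, ∀ w Z, IsOverhang H w → Staggered H w Z → L ≤ Z.length →
      ∃ c p, c ≤ L ∧ 0 < p ∧ p ≤ L ∧ (Z.drop c).HasPeriod p := by
  obtain ⟨M, hM⟩ := exists_length_le H
  have hfin := finite_setOf_isOverhang H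
  set N := hfin.toFinset.card with hN
  refine ⟨(N + 1) * M, fun w Z hw hZ hlen => ?_⟩
  have hblock : ∀ k : Fin (N + 1), k * M + M ≤ (N + 1) * M := fun k => by
    rw [← Nat.succ_mul]
    exact Nat.mul_le_mul_right M k.is_lt
  choose c v hkc hck hv hstag using fun k : Fin (N + 1) =>
    hZ.exists_drop hne hhead hM hw (k * M) ((hblock k).trans hlen)
  obtain ⟨i, -, j, -, hij, heq⟩ := Finset.exists_ne_map_eq_of_card_lt_of_maps_to
    (s := Finset.univ) (t := hfin.toFinset) (f := v) (by simp [← hN])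
    fun k _ => hfin.mem_toFinset.2 (hv k)
  wlog hlt : i < j generalizing i j
  · exact this j i hij.symm heq.symm (hij.lt_or_gt.resolve_left hlt)
  have hcc : c i < c j :=
    (hck i).trans_le (((Nat.succ_mul _ _).symm.trans_le (Nat.mul_le_mul_right M hlt)).trans (hkc j))
  have hcj := (hck j).trans_le (hblock j)
  refine ⟨c i, c j - c i, by omega, by omega, by omega, hasPeriod_of_drop_prefix ?_⟩
  rw [List.drop_drop, Nat.add_sub_of_le hcc.le]
  refine ((hstag i).prefix_or_prefix hne hhead (hv i) (heq ▸ hstag j)).resolve_left fun h => ?_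
  have := h.length_le
  simp only [List.length_drop] at this
  omega

lemma IsDesubstitution.exists_staggered (hcode : IsSuffixCode H) {s p s' p' : A}
    {z S x P S' x' P' : List A} (h : IsDesubstitution H s p z S x P)
    (h' : IsDesubstitution H s' p' z S' x' P') (hlt : S.length < S'.length) :
    ∃ w, IsOverhang H w ∧ Staggered H w (z.drop S.length) := by
  have hSz : S ++ (wordMap H x ++ P) = z := by rw [h.eq_append, List.append_assoc]
  have hSz' : S' ++ (wordMap H x' ++ P') = z := by rw [h'.eq_append, List.append_assoc]
  obtain ⟨w, rfl⟩ := List.prefix_of_prefix_length_le (hSz ▸ List.prefix_append _ _)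
    (hSz' ▸ List.prefix_append _ _) hlt.le
  refine ⟨w, ⟨⟨s', (List.suffix_append _ _).trans h'.left_suffix⟩, fun y y' hy => ?_⟩,
    x ++ [p], x' ++ [p'], ?_, ?_⟩
  · have hS : S = S ++ w := (hcode.eq_of_append_wordMap_eq (x := y) (y := y')
      (by rw [hy, List.append_assoc]) h.left_suffix h.left_lt h'.left_suffix h'.left_lt).1
    exact hlt.ne (congrArg List.length hS)
  · rw [← hSz, List.drop_left, wordMap_append, List.prefix_append_right_inj]
    simpa [wordMap] using h.right_prefix
  · rw [← hSz', List.append_assoc, List.drop_left, wordMap_append, List.prefix_append_right_inj,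
      List.prefix_append_right_inj]
    simpa [wordMap] using h'.right_prefix

lemma IsDesubstitution.unique (hprefix : IsPrefixCode H) (hsuffix : IsSuffixCode H)
    {s p s' p' : A} {z S x P S' x' P' : List A} (h : IsDesubstitution H s p z S x P)
    (h' : IsDesubstitution H s' p' z S' x' P')
    (hz : ∀ a w, IsOverhang H w → ∀ n < (H a).length, ¬ Staggered H w (z.drop n)) :
    (S, x, P) = (S', x', P') := by
  have hlen : S.length = S'.length := by
    rcases lt_trichotomy S.length S'.length with hlt | heq | hgt
    · obtain ⟨w, hw, hstag⟩ := h.exists_staggered hsuffix h' hlt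
      exact (hz s w hw _ h.left_lt hstag).elim
    · exact heq
    · obtain ⟨w, hw, hstag⟩ := h'.exists_staggered hsuffix h hgt
      exact (hz s' w hw _ h'.left_lt hstag).elim
  have heq := h.eq_append.symm.trans h'.eq_append
  rw [List.append_assoc, List.append_assoc] at heq
  obtain ⟨rfl, hxP⟩ := List.append_inj heq hlen
  obtain ⟨rfl, rfl⟩ := hprefix.eq_of_wordMap_append_eq hxP h.right_prefix h.right_lt
    h'.right_prefix h'.right_lt
  rfl

end Staggered

section Language

variable {u : ℕ → A} {H : A → List A}

lemma length_prefixWord (u : ℕ → A) (n : ℕ) : (prefixWord u n).length = n := by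
  simp only [prefixWord, List.length_map, List.length_range]

lemma prefixWord_add (u : ℕ → A) (m n : ℕ) :
    prefixWord u (m + n) = prefixWord u m ++ factorAt u m n := by
  simp only [prefixWord, factorAt, List.range_add, List.map_append, List.map_map,
    Function.comp_def]

lemma prefixWord_prefix (u : ℕ → A) {m n : ℕ} (h : m ≤ n) : prefixWord u m <+: prefixWord u n :=
  Nat.add_sub_of_le h ▸ prefixWord_add u m (n - m) ▸ List.prefix_append _ _

lemma mem_lang_iff {w : List A} : w ∈ Lang u ↔ ∃ n, w <:+: prefixWord u n := by
  constructor
  · rintro ⟨i, hw⟩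
    exact ⟨i + w.length, prefixWord u i, [], by rw [List.append_nil, prefixWord_add, ← hw]⟩
  · rintro ⟨n, l, r, h⟩
    refine ⟨l.length, List.ext_getElem (by simp [factorAt]) fun t ht _ => ?_⟩
    have hget : (prefixWord u n)[l.length + t]? = some w[t] := by
      rw [← h, List.append_assoc, List.getElem?_append_right (Nat.le_add_right _ _),
        Nat.add_sub_cancel_left, List.getElem?_append_left ht, List.getElem?_eq_getElem ht]
    obtain ⟨hlt, heq⟩ := List.getElem?_eq_some_iff.1 hget
    simpa [prefixWord, factorAt] using heq.symm

lemma prefixWord_mem_lang (u : ℕ → A) (n : ℕ) : prefixWord u n ∈ Lang u :=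
  mem_lang_iff.2 ⟨n, List.infix_rfl⟩

lemma mem_lang_of_infix {v w : List A} (hw : w ∈ Lang u) (h : v <:+: w) : v ∈ Lang u :=
  let ⟨n, hn⟩ := mem_lang_iff.1 hw
  mem_lang_iff.2 ⟨n, h.trans hn⟩

lemma isFixedPointSubst_iff (hne : ∀ a, H a ≠ []) :
    IsFixedPointSubst H u ↔ ∀ n, ∃ m, wordMap H (prefixWord u n) = prefixWord u m := by
  have hlt (n : ℕ) : n < (wordMap H (prefixWord u (n + 1))).length := by
    have h := length_le_length_wordMap hne (prefixWord u (n + 1))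
    rwa [length_prefixWord] at h
  have hsubst (n : ℕ) : substSeq H u n = (wordMap H (prefixWord u (n + 1)))[n]'(hlt n) :=
    List.getD_eq_getElem _ _ (hlt n)
  constructor
  · intro hu n
    refine ⟨(wordMap H (prefixWord u n)).length, List.ext_getElem (length_prefixWord _ _).symm
      fun t ht _ => ?_⟩
    have hut : u t = (wordMap H (prefixWord u (t + 1)))[t]'(hlt t) := by
      rw [← hsubst, hu]
    trans u t
    · rw [hut]
      rcases le_total n (t + 1) with h | h
      · exact ((prefixWord_prefix u h).flatMap H).getElem ht
      · exact (((prefixWord_prefix u h).flatMap H).getElem (hlt t)).symm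
    · simp [prefixWord]
  · intro h
    funext n
    obtain ⟨m, hm⟩ := h (n + 1)
    simp only [hsubst, hm]
    simp [prefixWord]

lemma exists_wordMap_eq_append (hne : ∀ a, H a ≠ []) (hu : IsFixedPointSubst H u) {z : List A}
    (hz : z ∈ Lang u) : ∃ X ∈ Lang u, ∃ l r, wordMap H X = l ++ z ++ r ∧ r ≠ [] := by
  obtain ⟨n, l, r, hn⟩ := mem_lang_iff.1 hz
  obtain ⟨m, hm⟩ := (isFixedPointSubst_iff hne).1 hu (n + 1)
  have hnm : n + 1 ≤ m := by
    simpa only [hm, length_prefixWord] using length_le_length_wordMap hne (prefixWord u (n + 1))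
  refine ⟨prefixWord u (n + 1), prefixWord_mem_lang u _, l, r ++ factorAt u n (m - n), ?_, ?_⟩
  · rw [hm, ← List.append_assoc, hn, ← prefixWord_add, Nat.add_sub_of_le (by omega)]
  · refine List.append_ne_nil_of_right_ne_nil _ (List.ne_nil_of_length_pos ?_)
    simp only [factorAt, List.length_map, List.length_range]
    omega

end Language

section Recurrence

variable {u : ℕ → A}

/-- `u` is recurrent. Requiring every factor to occur at a nonzero position is enough: applied to
prefixes of `u`, it makes each of them, hence each factor, occur infinitely often. -/
def RecurrentSeq (u : ℕ → A) : Prop := ∀ w ∈ Lang u, ∃ v, v ≠ [] ∧ v ++ w ∈ Lang u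

/-- `u` is uniformly recurrent: each factor occurs in all long enough factors. -/
def UniformlyRecurrentSeq (u : ℕ → A) : Prop :=
  ∀ w ∈ Lang u, ∃ R, ∀ v ∈ Lang u, R ≤ v.length → w <:+: v

/-- For each `p`, the factors of `u` with period `p` have bounded length. Over a finite alphabet,
this says that the orbit closure of `u` contains no periodic sequence. -/
def BoundedPeriodicFactors (u : ℕ → A) : Prop :=
  ∀ p, 0 < p → ∃ L, ∀ v ∈ Lang u, v.HasPeriod p → v.length < L

lemma UniformlyRecurrentSeq.recurrentSeq (h : UniformlyRecurrentSeq u) : RecurrentSeq u := by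
  intro w hw
  obtain ⟨R, hR⟩ := h w hw
  have hsucc : prefixWord u (R + 1) = u 0 :: factorAt u 1 R := by
    rw [Nat.add_comm, prefixWord_add]
    rfl
  obtain ⟨l, r, hlr⟩ := hR (factorAt u 1 R)
    (mem_lang_of_infix (prefixWord_mem_lang u (R + 1)) (hsucc ▸ (List.suffix_cons _ _).isInfix))
    (by simp [factorAt])
  refine ⟨u 0 :: l, List.cons_ne_nil _ _,
    mem_lang_of_infix (prefixWord_mem_lang u (R + 1)) ⟨[], r, ?_⟩⟩
  rw [hsucc, ← hlr]
  simp

lemma periodicSeq_of_forall_hasPeriod {p : ℕ} (hp : 0 < p)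
    (h : ∀ n, (prefixWord u n).HasPeriod p) : PeriodicSeq u := by
  refine ⟨p, hp, fun n => ?_⟩
  have := List.hasPeriod_iff_getElem?.1 (h (n + p + 1)) n (by rw [length_prefixWord]; omega)
  simpa [prefixWord, show n < n + p + 1 by omega] using this.symm

lemma UniformlyRecurrentSeq.boundedPeriodicFactors (h : UniformlyRecurrentSeq u)
    (hper : ¬ PeriodicSeq u) : BoundedPeriodicFactors u := by
  intro p hp
  obtain ⟨n, hn⟩ := not_forall.1 fun hall => hper (periodicSeq_of_forall_hasPeriod hp hall)
  obtain ⟨R, hR⟩ := h _ (prefixWord_mem_lang u n)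
  exact ⟨R, fun v hv hvp => lt_of_not_ge fun hle => hn (hvp.infix (hR v hv hle))⟩

end Recurrence

section Primitive

variable {u : ℕ → A} {H : A → List A}

/-- The `n`-th power of the substitution `H`. -/
def substPow (H : A → List A) (n : ℕ) (a : A) : List A := (wordMap H)^[n] [a]

lemma wordMap_substPow (H : A → List A) (n : ℕ) : wordMap (substPow H n) = (wordMap H)^[n] := by
  induction n with
  | zero => exact funext fun w => List.flatMap_singleton' w
  | succ n ih =>
    funext w
    rw [Function.iterate_succ_apply', ← ih, wordMap, wordMap, wordMap, List.flatMap_assoc]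
    exact congrArg w.flatMap (funext fun a => Function.iterate_succ_apply' _ _ _)

lemma substPow_ne_nil (hne : ∀ a, H a ≠ []) (n : ℕ) (a : A) : substPow H n a ≠ [] := by
  induction n with
  | zero => exact List.cons_ne_nil a []
  | succ n ih =>
    rw [substPow, Function.iterate_succ_apply']
    exact List.ne_nil_of_length_pos
      ((List.length_pos_iff.2 ih).trans_le (length_le_length_wordMap hne _))

lemma IsFixedPointSubst.substPow (hne : ∀ a, H a ≠ []) (hu : IsFixedPointSubst H u) (n : ℕ) :
    IsFixedPointSubst (substPow H n) u := by
  rw [isFixedPointSubst_iff hne] at hu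
  rw [isFixedPointSubst_iff (substPow_ne_nil hne n), wordMap_substPow]
  intro k
  induction n with
  | zero => exact ⟨k, rfl⟩
  | succ n ih =>
    obtain ⟨m, hm⟩ := ih
    rw [Function.iterate_succ_apply', hm]
    exact hu m

lemma exists_image_infix [Finite A] (hne : ∀ a, H a ≠ []) (hu : IsFixedPointSubst H u) :
    ∃ R, ∀ v ∈ Lang u, R ≤ v.length → ∃ a, H a <:+: v := by
  obtain ⟨M, hM⟩ := exists_length_le H
  refine ⟨2 * M + 1, fun v hv hlen => ?_⟩
  obtain ⟨X, -, l, r, hX, hr⟩ := exists_wordMap_eq_append hne hu hv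
  cases v with
  | nil => exact absurd hlen (by simp)
  | cons c v =>
    rw [List.length_cons] at hlen
    obtain ⟨s, p, S, x, P, h, -⟩ :=
      exists_isDesubstitution_of_wordMap_eq (X := X) (l := l ++ [c]) (z := v)
        (by simpa using hX) (by simp) hr fun a => (hM a).trans (by omega)
    have hlt := h.left_lt.trans_le (hM s)
    have hlt' := h.right_lt.trans_le (hM p)
    obtain rfl := h.eq_append
    cases x with
    | nil =>
      simp only [wordMap, List.flatMap_nil, List.append_nil, List.length_append] at hlen
      omega
    | cons a x => exact ⟨a, c :: S, wordMap H x ++ P, by simp [wordMap_cons]⟩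

lemma PrimitiveSubst.exists_le_length_substPow [Nontrivial A] (hprim : PrimitiveSubst H) (N : ℕ)
    (a : A) : ∃ n, N ≤ (substPow H n a).length := by
  obtain ⟨k, -, hk⟩ := hprim
  obtain ⟨b, c, hbc⟩ := exists_pair_ne A
  have htwo (d : A) : 2 ≤ (substPow H k d).length :=
    (List.subperm_of_subset (l₁ := [b, c]) (by simpa using hbc)
      (by simpa [substPow] using ⟨hk d b, hk d c⟩)).length_le
  have hpow (m : ℕ) : 2 ^ m ≤ (((wordMap H)^[k])^[m] [a]).length := by
    induction m with
    | zero => simp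
    | succ m ih =>
      rw [Function.iterate_succ_apply', ← wordMap_substPow, Nat.pow_succ']
      rw [← wordMap_substPow] at ih
      exact (Nat.mul_le_mul_left 2 ih).trans (mul_length_le_length_wordMap htwo _)
  refine ⟨k * N, ?_⟩
  rw [substPow, Function.iterate_mul]
  exact Nat.lt_two_pow_self.le.trans (hpow N)

lemma PrimitiveSubst.uniformlyRecurrentSeq [Finite A] [Nontrivial A] (hprim : PrimitiveSubst H)
    (hne : ∀ a, H a ≠ []) (hu : IsFixedPointSubst H u) : UniformlyRecurrentSeq u := by
  intro w hw
  obtain ⟨N, hwN⟩ := mem_lang_iff.1 hw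
  obtain ⟨n, hn⟩ := hprim.exists_le_length_substPow N (u 0)
  have hwn : w <:+: substPow H n (u 0) := by
    obtain ⟨m, hm⟩ := (isFixedPointSubst_iff (substPow_ne_nil hne n)).1 (hu.substPow hne n) 1
    replace hm : substPow H n (u 0) = prefixWord u m := by simpa [wordMap, prefixWord] using hm
    rw [hm, length_prefixWord] at hn
    exact hm ▸ hwN.trans (prefixWord_prefix u hn).isInfix
  obtain ⟨k, -, hk⟩ := hprim
  have hwa (a : A) : w <:+: substPow H (n + k) a := by
    refine hwn.trans ?_
    rw [substPow, substPow, Function.iterate_add_apply, ← wordMap_substPow]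
    exact wordMap_infix _ ((List.singleton_infix_iff _ _).2 (hk a (u 0)))
  obtain ⟨R, hR⟩ := exists_image_infix (substPow_ne_nil hne (n + k)) (hu.substPow hne (n + k))
  refine ⟨R, fun v hv hlen => ?_⟩
  obtain ⟨a, ha⟩ := hR v hv hlen
  exact (hwa a).trans ha

end Primitive

section Recognizability

variable {u : ℕ → A} {H : A → List A}

lemma BoundedPeriodicFactors.exists_bound (h : BoundedPeriodicFactors u) (K : ℕ) :
    ∃ L, ∀ p, 0 < p → p ≤ K → ∀ v ∈ Lang u, v.HasPeriod p → v.length < L := by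
  choose! L hL using h
  exact ⟨(Finset.range (K + 1)).sup L, fun p hp hpK v hv hper =>
    (hL p hp v hv hper).trans_le (Finset.le_sup (Finset.mem_range_succ_iff.2 hpK))⟩

lemma exists_length_lt_of_staggered [Finite A] (hne : ∀ a, H a ≠ [])
    (hhead : Function.Injective fun a => (H a).head?) (hper : BoundedPeriodicFactors u) :
    ∃ L, ∀ w, IsOverhang H w → ∀ Z ∈ Lang u, Staggered H w Z → Z.length < L := by
  obtain ⟨K, hK⟩ := exists_hasPeriod_drop_of_staggered hne hhead
  obtain ⟨L, hL⟩ := hper.exists_bound K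
  refine ⟨K + L, fun w hw Z hZ hstag => lt_of_not_ge fun hlen => ?_⟩
  obtain ⟨c, p, hc, hp, hpK, hperiod⟩ := hK w Z hw hstag (by omega)
  have := hL p hp hpK _ (mem_lang_of_infix hZ (List.drop_suffix c Z).isInfix) hperiod
  rw [List.length_drop] at this
  omega

lemma RecurrentSeq.exists_isDesubstitution (hrec : RecurrentSeq u) (hne : ∀ a, H a ≠ [])
    (hu : IsFixedPointSubst H u) {z : List A} (hz : z ∈ Lang u)
    (hlen : ∀ a, (H a).length ≤ z.length) :
    ∃ s p S x P, IsDesubstitution H s p z S x P ∧ [s] ++ x ++ [p] ∈ Lang u := by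
  obtain ⟨v, hv, hvz⟩ := hrec z hz
  obtain ⟨X, hX, l, r, h, hr⟩ := exists_wordMap_eq_append hne hu hvz
  obtain ⟨s, p, S, x, P, hdes, hinfix⟩ := exists_isDesubstitution_of_wordMap_eq (l := l ++ v)
    (by rw [h, List.append_assoc l v z]) (List.append_ne_nil_of_right_ne_nil _ hv) hr hlen
  exact ⟨s, p, S, x, P, hdes, mem_lang_of_infix hX hinfix⟩

theorem exists_recognizability_bound_general [Finite A] (hne : ∀ a, H a ≠ [])
    (hhead : Function.Injective fun a => (H a).head?) (hcode : IsSuffixCode H)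
    (hu : IsFixedPointSubst H u) (hrec : RecurrentSeq u) (hper : BoundedPeriodicFactors u) :
    ∃ l : ℕ, 0 < l ∧ RecogBound H u l := by
  obtain ⟨M, hM⟩ := exists_length_le H
  obtain ⟨L, hL⟩ := exists_length_lt_of_staggered hne hhead hper
  refine ⟨L + M + 1, by omega, fun z hz hlen => ?_⟩
  have hz_long (a : A) : (H a).length + L ≤ z.length := by
    have := hM a
    omega
  obtain ⟨s, p, S, x, P, h, hsxp⟩ := hrec.exists_isDesubstitution hne hu hz
    fun a => (Nat.le_add_right _ _).trans (hz_long a)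
  refine ⟨(S, x, P), ⟨s, p, h.eq_append, mem_lang_of_infix hsxp ⟨[s], [p], rfl⟩, h.left_suffix,
    h.left_lt, h.right_prefix, h.right_lt, hsxp⟩, ?_⟩
  rintro ⟨S', x', P'⟩ ⟨s', p', heq, -, hS', hSlt', hP', hPlt', -⟩
  have h' : IsDesubstitution H s' p' z S' x' P' := ⟨heq, hS', hSlt', hP', hPlt'⟩
  refine h'.unique (isPrefixCode_of_injective_head? hne hhead) hcode h
    fun a w hw n hn hstag => ?_
  have hdrop := hL w hw _ (mem_lang_of_infix hz (List.drop_suffix n z).isInfix) hstag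
  rw [List.length_drop] at hdrop
  have := hz_long a
  omega

end Recognizability

/-- (Strong recognizability, Theorem `thm-mosse-plus`.) For a primitive,
aperiodic, marked substitution there is `l(H) > 0` such that every word of the language
longer than `l(H)` has a unique desubstitution `z = S·H(x)·P`. -/
theorem exists_recognizability_bound
    {A : Type*} [Fintype A] [DecidableEq A] [TopologicalSpace A] [DiscreteTopology A]
    (H : A → List A) (hne : ∀ a, H a ≠ [])
    (hprim : PrimitiveSubst H) (haper : AperiodicSubst H)
    (hmarked : MarkedSubst H hne)
    (u : ℕ → A) (hu : IsFixedPointSubst H u) :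
    ∃ l : ℕ, 0 < l ∧ RecogBound H u l := by
  have hnper := haper u hu
  have : Nontrivial A := not_subsingleton_iff_nontrivial.1 fun _ =>
    hnper ⟨1, one_pos, fun _ => Subsingleton.elim _ _⟩
  have hrec := hprim.uniformlyRecurrentSeq hne hu
  exact exists_recognizability_bound_general hne hmarked.injective_head? hmarked.isSuffixCode hu
    hrec.recurrentSeq (hrec.boundedPeriodicFactors hnper)
end

section
/- Let A be a finite alphabet and let X ⊆ A^ℕ be a nonempty closed σ-invariant set on which the shift σ admits a unique σ-invariant Borel probability measure μ. Let f : [0,1] → ℝ be continuous and let g : X → ℝ be continuous. Then (1/n) Σ_{k=0}^{n} f(k/n) g(σ^k(x)) converges, as n → ∞, to (∫_0^1 f(t) dt)·(∫_X g dμ), uniformly in x ∈ X. -/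
open Filter Topology MeasureTheory

variable {A : Type*}

/-!
The weighted averages act on `C(X)` through the composition operator `U g = g ∘ σ`, with weights
`f (k / n) / n` whose total variation in `k` tends to `0` because `f` is uniformly continuous.
Summation by parts therefore sends every coboundary `U g - g` to `0`, and by equicontinuity also
every uniform limit of coboundaries, while a constant `c` is sent to a Riemann sum of `f` times `c`.

Any limit point of the empirical measures along orbit segments of growing length is an invariant
measure. Under unique ergodicity the Birkhoff averages `A_N g` thus converge uniformly to the
constant `c = ∫ g dμ`. Since every `g - A_N g` is a coboundary, `g - c` is a uniform limit of
coboundaries.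
-/

open Finset Set
open scoped NNReal ENNReal

section StronglyRegular

variable {𝕜 E : Type*} [NormedField 𝕜] [SeminormedAddCommGroup E] [NormedSpace 𝕜 E]

/-- Weights `w n k`, `k ≤ n`, of a summation method that is strongly regular in the sense of
Lorentz, except that the total masses tend to `L` rather than to `1`. The last weight is part of
the variation, because the weights are implicitly continued by `0` beyond `k = n`. -/
structure IsStronglyRegular (w : ℕ → ℕ → 𝕜) (L : 𝕜) : Prop where
  bounded : ∃ M : ℝ≥0, ∀ n, ∑ k ∈ range (n + 1), ‖w n k‖₊ ≤ M
  tendsto_sum : Tendsto (fun n => ∑ k ∈ range (n + 1), w n k) atTop (𝓝 L)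
  tendsto_last : Tendsto (fun n => w n n) atTop (𝓝 0)
  tendsto_variation :
    Tendsto (fun n => ∑ k ∈ range n, ‖w n (k + 1) - w n k‖) atTop (𝓝 0)

theorem norm_sum_smul_succ_sub_le {w : ℕ → 𝕜} {a : ℕ → E} {D : ℝ} (ha : ∀ k, ‖a k - a 0‖ ≤ D)
    (n : ℕ) :
    ‖∑ k ∈ range (n + 1), w k • (a (k + 1) - a k)‖ ≤
      (‖w n‖ + ∑ k ∈ range n, ‖w (k + 1) - w k‖) * D := by
  rw [sum_range_by_parts]
  simp only [sum_range_sub, Nat.add_sub_cancel]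
  rw [add_mul, sum_mul]
  refine (norm_sub_le _ _).trans (add_le_add ?_ (norm_sum_le_of_le _ fun k _ => ?_))
  · exact (norm_smul_le _ _).trans (by gcongr; exact ha _)
  · exact (norm_smul_le _ _).trans (by gcongr; exact ha _)

theorem lipschitzWith_sum_smul_iterate {T : E → E} (hT : LipschitzWith 1 T) {s : Finset ℕ}
    {w : ℕ → 𝕜} {M : ℝ≥0} (hM : ∑ k ∈ s, ‖w k‖₊ ≤ M) :
    LipschitzWith M fun v => ∑ k ∈ s, w k • T^[k] v := by
  refine LipschitzWith.of_dist_le_mul fun v v' => ?_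
  have hiter (k : ℕ) : dist (T^[k] v) (T^[k] v') ≤ dist v v' := by
    simpa using (hT.iterate k).dist_le_mul v v'
  calc dist (∑ k ∈ s, w k • T^[k] v) (∑ k ∈ s, w k • T^[k] v')
      ≤ ∑ k ∈ s, ‖w k‖ * dist v v' := dist_sum_sum_le_of_le _ fun k _ => by
        rw [dist_smul₀]; gcongr; exact hiter k
    _ = (∑ k ∈ s, ‖w k‖₊ : ℝ≥0) * dist v v' := by simp [sum_mul]
    _ ≤ M * dist v v' := by gcongr

variable {U : E →ₗ[𝕜] E} {w : ℕ → ℕ → 𝕜} {L : 𝕜}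

theorem IsStronglyRegular.tendsto_sum_smul_iterate_sub_one_apply (hw : IsStronglyRegular w L)
    (hU : LipschitzWith 1 U) (v : E) :
    Tendsto (fun n => ∑ k ∈ range (n + 1), w n k • U^[k] ((U - 1) v)) atTop (𝓝 0) := by
  have hbdd (k : ℕ) : ‖U^[k] v - U^[0] v‖ ≤ 2 * ‖v‖ := by
    have h := (hU.iterate k).norm_le_mul (iterate_map_zero U k) v
    simp only [one_pow, NNReal.coe_one, one_mul] at h
    exact (norm_sub_le _ _).trans (by simpa [two_mul] using h)
  have hbound : Tendsto (fun n => (‖w n n‖ + ∑ k ∈ range n, ‖w n (k + 1) - w n k‖) * (2 * ‖v‖))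
      atTop (𝓝 0) := by
    simpa using (hw.tendsto_last.norm.add hw.tendsto_variation).mul_const (2 * ‖v‖)
  refine squeeze_zero_norm (fun n => ?_) hbound
  have hstep (k : ℕ) : U^[k] ((U - 1) v) = U^[k + 1] v - U^[k] v := by
    rw [LinearMap.sub_apply, iterate_map_sub, Function.iterate_succ_apply, Module.End.one_apply]
  simp only [hstep]
  exact norm_sum_smul_succ_sub_le hbdd n

theorem IsStronglyRegular.tendsto_sum_smul_iterate (hw : IsStronglyRegular w L)
    (hU : LipschitzWith 1 U) {v p : E} (hp : Function.IsFixedPt U p)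
    (hv : v - p ∈ closure (LinearMap.range (U - 1) : Set E)) :
    Tendsto (fun n => ∑ k ∈ range (n + 1), w n k • U^[k] v) atTop (𝓝 (L • p)) := by
  obtain ⟨M, hM⟩ := hw.bounded
  have hclosed : IsClosed
      {u | Tendsto (fun n => ∑ k ∈ range (n + 1), w n k • U^[k] u) atTop (𝓝 (0 : E))} :=
    (LipschitzWith.uniformEquicontinuous _ M fun n =>
      lipschitzWith_sum_smul_iterate hU (hM n)).equicontinuous.isClosed_setOfPred_tendsto
        continuous_const
  have hsub : Tendsto (fun n => ∑ k ∈ range (n + 1), w n k • U^[k] (v - p)) atTop (𝓝 0) :=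
    closure_minimal (Set.range_subset_iff.2 <| hw.tendsto_sum_smul_iterate_sub_one_apply hU)
      hclosed hv
  have hfix : Tendsto (fun n => ∑ k ∈ range (n + 1), w n k • U^[k] p) atTop (𝓝 (L • p)) := by
    simpa only [(hp.iterate _).eq, ← sum_smul] using hw.tendsto_sum.smul_const p
  simpa only [iterate_map_sub, smul_sub, sum_sub_distrib, sub_add_cancel, zero_add] using
    hsub.add hfix

end StronglyRegular

section Coboundary

theorem sub_iterate_mem_range_sub_one {R M : Type*} [Ring R] [AddCommGroup M] [Module R M]
    (U : M →ₗ[R] M) (v : M) (k : ℕ) : v - U^[k] v ∈ LinearMap.range (U - 1) := by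
  induction k with
  | zero => simp
  | succ k ih =>
    rw [Function.iterate_succ_apply', ← sub_sub_sub_cancel_right v _ (U^[k] v)]
    exact sub_mem ih ⟨U^[k] v, by simp⟩

variable {𝕜 E : Type*} [DivisionRing 𝕜] [CharZero 𝕜] [AddCommGroup E] [Module 𝕜 E]

theorem sub_birkhoffAverage_mem_range_sub_one (U : E →ₗ[𝕜] E) (v : E) {N : ℕ} (hN : N ≠ 0) :
    v - birkhoffAverage 𝕜 U id N v ∈ LinearMap.range (U - 1) := by
  have hN' : (N : 𝕜) ≠ 0 := Nat.cast_ne_zero.2 hN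
  have h : v - birkhoffAverage 𝕜 U id N v = (N : 𝕜)⁻¹ • ∑ k ∈ range N, (v - U^[k] v) := by
    simp [birkhoffAverage, birkhoffSum, smul_sub, ← Nat.cast_smul_eq_nsmul 𝕜, hN']
  rw [h]
  exact Submodule.smul_mem _ _ (sum_mem fun k _ => sub_iterate_mem_range_sub_one U v k)

theorem sub_mem_closure_range_sub_one_of_tendsto_birkhoffAverage [TopologicalSpace E]
    [ContinuousSub E] {U : E →ₗ[𝕜] E} {v p : E}
    (h : Tendsto (fun N => birkhoffAverage 𝕜 U id N v) atTop (𝓝 p)) :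
    v - p ∈ closure (LinearMap.range (U - 1) : Set E) :=
  mem_closure_of_tendsto (tendsto_const_nhds.sub h) <|
    (eventually_ne_atTop 0).mono fun _ hN => sub_birkhoffAverage_mem_range_sub_one U v hN

end Coboundary

section RiemannSum

variable {E : Type*} [NormedAddCommGroup E] {f : ℝ → E}

theorem natCast_div_mem_Icc {n k : ℕ} (hk : k ≤ n) : (k : ℝ) / n ∈ Icc (0 : ℝ) 1 :=
  ⟨by positivity, div_le_one_of_le₀ (by exact_mod_cast hk) (by positivity)⟩

theorem Icc_natCast_div_subset_Icc {n k : ℕ} (hk : k < n) :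
    Icc ((k : ℝ) / n) ((k + 1 : ℕ) / n) ⊆ Icc 0 1 :=
  Icc_subset_Icc (natCast_div_mem_Icc hk.le).1 (natCast_div_mem_Icc hk).2

theorem eventually_forall_norm_sub_natCast_div_le (hf : ContinuousOn f (Icc 0 1)) {ε : ℝ}
    (hε : 0 < ε) :
    ∀ᶠ n : ℕ in atTop, ∀ k < n, ∀ t ∈ Icc ((k : ℝ) / n) ((k + 1 : ℕ) / n),
      ‖f t - f (k / n)‖ ≤ ε := by
  obtain ⟨δ, hδ, h⟩ := Metric.uniformContinuousOn_iff_le.1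
    (isCompact_Icc.uniformContinuousOn_of_continuous hf) ε hε
  filter_upwards [tendsto_one_div_atTop_nhds_zero_nat.eventually_le_const hδ] with n hn k hk t ht
  rw [← dist_eq_norm]
  refine h _ (Icc_natCast_div_subset_Icc hk ht) _ (natCast_div_mem_Icc hk.le) ?_
  rw [Real.dist_eq, abs_of_nonneg (sub_nonneg.2 ht.1)]
  calc t - k / n ≤ (k + 1 : ℕ) / n - k / n := by gcongr; exact ht.2
    _ = 1 / n := by push_cast; ring
    _ ≤ δ := hn

theorem tendsto_inv_mul_sum_norm_sub_natCast_div (hf : ContinuousOn f (Icc 0 1)) :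
    Tendsto (fun n : ℕ => (n : ℝ)⁻¹ * ∑ k ∈ range n, ‖f ((k + 1 : ℕ) / n) - f (k / n)‖)
      atTop (𝓝 0) := by
  refine Metric.tendsto_nhds.2 fun ε hε => ?_
  filter_upwards [eventually_forall_norm_sub_natCast_div_le hf (half_pos hε),
    eventually_ne_atTop 0] with n hosc hn
  rw [dist_zero_right, Real.norm_of_nonneg (by positivity)]
  calc (n : ℝ)⁻¹ * ∑ k ∈ range n, ‖f ((k + 1 : ℕ) / n) - f (k / n)‖
      ≤ (n : ℝ)⁻¹ * ∑ _k ∈ range n, ε / 2 := by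
        gcongr with k hk
        exact hosc k (Finset.mem_range.1 hk) _ (right_mem_Icc.2 (by gcongr; simp))
    _ = ε / 2 := by simp [hn]
    _ < ε := half_lt_self hε

variable [NormedSpace ℝ E]

theorem integral_eq_sum_integral_natCast_div (hf : ContinuousOn f (Icc 0 1)) {n : ℕ}
    (hn : n ≠ 0) :
    ∫ t in (0 : ℝ)..1, f t =
      ∑ k ∈ range n, ∫ t in ((k : ℝ) / n)..((k + 1 : ℕ) / n), f t := by
  have hint (k : ℕ) (hk : k < n) :
      IntervalIntegrable f volume ((k : ℝ) / n) ((k + 1 : ℕ) / n) :=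
    (hf.mono (Icc_natCast_div_subset_Icc hk)).intervalIntegrable_of_Icc (by gcongr; simp)
  rw [intervalIntegral.sum_integral_adjacent_intervals (a := fun k : ℕ => (k : ℝ) / n) hint]
  simp [hn]

theorem tendsto_inv_smul_apply_natCast_div_self (f : ℝ → E) :
    Tendsto (fun n : ℕ => (n : ℝ)⁻¹ • f (n / n)) atTop (𝓝 0) := by
  have h : Tendsto (fun n : ℕ => (n : ℝ)⁻¹ • f 1) atTop (𝓝 0) := by
    simpa using (tendsto_inv_atTop_nhds_zero_nat (𝕜 := ℝ)).smul_const (f 1)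
  refine h.congr' ?_
  filter_upwards [eventually_ne_atTop 0] with n hn
  rw [div_self (Nat.cast_ne_zero.2 hn)]

variable [CompleteSpace E]

theorem norm_sub_smul_sub_integral_le {a b ε : ℝ} (hab : a ≤ b) (hf : ContinuousOn f (Icc a b))
    (hε : ∀ t ∈ Icc a b, ‖f t - f a‖ ≤ ε) :
    ‖(b - a) • f a - ∫ t in a..b, f t‖ ≤ ε * (b - a) := by
  have hint : IntervalIntegrable f volume a b := hf.intervalIntegrable_of_Icc hab
  rw [norm_sub_rev, ← intervalIntegral.integral_const,
    ← intervalIntegral.integral_sub hint intervalIntegrable_const,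
    ← abs_of_nonneg (sub_nonneg.2 hab)]
  refine intervalIntegral.norm_integral_le_of_norm_le_const fun t ht => hε t ?_
  rw [uIoc_of_le hab] at ht
  exact Ioc_subset_Icc_self ht

theorem tendsto_sum_range_inv_smul_natCast_div (hf : ContinuousOn f (Icc 0 1)) :
    Tendsto (fun n : ℕ => ∑ k ∈ range n, (n : ℝ)⁻¹ • f (k / n)) atTop
      (𝓝 (∫ t in (0 : ℝ)..1, f t)) := by
  refine Metric.tendsto_nhds.2 fun ε hε => ?_
  filter_upwards [eventually_forall_norm_sub_natCast_div_le hf (half_pos hε),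
    eventually_ne_atTop 0] with n hosc hn
  have hlen (k : ℕ) : ((k + 1 : ℕ) : ℝ) / n - k / n = (n : ℝ)⁻¹ := by push_cast; ring
  have hcell (k : ℕ) (hk : k ∈ range n) :
      ‖(n : ℝ)⁻¹ • f (k / n) - ∫ t in ((k : ℝ) / n)..((k + 1 : ℕ) / n), f t‖ ≤
        ε / 2 * (n : ℝ)⁻¹ := by
    have hkn := Finset.mem_range.1 hk
    rw [← hlen k]
    exact norm_sub_smul_sub_integral_le (by gcongr; simp)
      (hf.mono (Icc_natCast_div_subset_Icc hkn)) (hosc k hkn)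
  rw [dist_eq_norm, integral_eq_sum_integral_natCast_div hf hn, ← sum_sub_distrib]
  calc ‖∑ k ∈ range n, ((n : ℝ)⁻¹ • f (k / n) - ∫ t in ((k : ℝ) / n)..((k + 1 : ℕ) / n), f t)‖
      ≤ ∑ _k ∈ range n, ε / 2 * (n : ℝ)⁻¹ := norm_sum_le_of_le _ hcell
    _ = ε / 2 := by
        rw [sum_const, card_range, nsmul_eq_mul]
        field_simp
    _ < ε := half_lt_self hε

theorem tendsto_sum_range_succ_inv_smul_natCast_div (hf : ContinuousOn f (Icc 0 1)) :
    Tendsto (fun n : ℕ => ∑ k ∈ range (n + 1), (n : ℝ)⁻¹ • f (k / n)) atTop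
      (𝓝 (∫ t in (0 : ℝ)..1, f t)) := by
  simpa only [sum_range_succ, add_zero] using
    (tendsto_sum_range_inv_smul_natCast_div hf).add (tendsto_inv_smul_apply_natCast_div_self f)

theorem isStronglyRegular_inv_mul_natCast_div {f : ℝ → ℝ} (hf : ContinuousOn f (Icc 0 1)) :
    IsStronglyRegular (fun n k : ℕ => (n : ℝ)⁻¹ * f (k / n)) (∫ t in (0 : ℝ)..1, f t) where
  bounded := by
    obtain ⟨M, hM⟩ := (tendsto_sum_range_succ_inv_smul_natCast_div hf.norm).bddAbove_range
    refine ⟨M.toNNReal, fun n => NNReal.le_toNNReal_of_coe_le ?_⟩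
    simpa using hM (Set.mem_range_self n)
  tendsto_sum := tendsto_sum_range_succ_inv_smul_natCast_div hf
  tendsto_last := tendsto_inv_smul_apply_natCast_div_self f
  tendsto_variation := by
    simpa [← mul_sub, mul_sum] using tendsto_inv_mul_sum_norm_sub_natCast_div hf

end RiemannSum

section UniqueErgodicity

variable {Y : Type*} [MeasurableSpace Y]

/-- The uniform probability measure on the orbit segment `x, T x, …, T^[n - 1] x`, counted with
multiplicity; it is the zero measure for `n = 0`. -/
noncomputable def empiricalMeasure (T : Y → Y) (n : ℕ) (x : Y) : Measure Y :=
  (n : ℝ≥0∞)⁻¹ • ∑ k ∈ range n, Measure.dirac (T^[k] x)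

instance isProbabilityMeasure_empiricalMeasure (T : Y → Y) (n : ℕ) [NeZero n] (x : Y) :
    IsProbabilityMeasure (empiricalMeasure T n x) :=
  ⟨by simp [empiricalMeasure, ENNReal.inv_mul_cancel, NeZero.ne n]⟩

theorem integral_empiricalMeasure [MeasurableSingletonClass Y] {E : Type*} [NormedAddCommGroup E]
    [NormedSpace ℝ E] [CompleteSpace E] (T : Y → Y) (g : Y → E) (n : ℕ) (x : Y) :
    ∫ y, g y ∂(empiricalMeasure T n x) = birkhoffAverage ℝ T g n x := by
  rw [empiricalMeasure, integral_smul_measure,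
    integral_finsetSum_measure fun k _ => integrable_dirac enorm_lt_top]
  simp [birkhoffAverage, birkhoffSum]

theorem tendsto_birkhoffAverage_apply_sub_birkhoffAverage_of_norm_le {α ι E : Type*}
    [NormedAddCommGroup E] [NormedSpace ℝ E] {T : α → α} {g : α → E} {C : ℝ}
    (hg : ∀ a, ‖g a‖ ≤ C) {l : Filter ι} {N : ι → ℕ} (hN : Tendsto N l atTop) (x : ι → α) :
    Tendsto (fun i => birkhoffAverage ℝ T g (N i) (T (x i)) - birkhoffAverage ℝ T g (N i) (x i))
      l (𝓝 0) := by
  have hbound : Tendsto (fun i => (N i : ℝ)⁻¹ * (C + C)) l (𝓝 0) := by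
    simpa using ((tendsto_inv_atTop_nhds_zero_nat (𝕜 := ℝ)).comp hN).mul_const (C + C)
  refine squeeze_zero_norm (fun i => ?_) hbound
  rw [birkhoffAverage_apply_sub_birkhoffAverage, norm_smul, norm_inv, Real.norm_natCast]
  gcongr
  exact norm_sub_le_of_le (hg _) (hg _)

variable [TopologicalSpace Y] [T2Space Y] [BorelSpace Y] [HasOuterApproxClosed Y]

theorem measurePreserving_of_tendsto_empiricalMeasure {T : Y → Y} (hT : Continuous T)
    {ι : Type*} {l : Filter ι} [l.NeBot] {N : ι → ℕ} (hN : Tendsto N l atTop) {x : ι → Y}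
    {P : ι → ProbabilityMeasure Y} (hP : ∀ i, (P i : Measure Y) = empiricalMeasure T (N i) (x i))
    {ν : ProbabilityMeasure Y} (hν : Tendsto P l (𝓝 ν)) :
    MeasurePreserving T (ν : Measure Y) ν := by
  have := Measure.isProbabilityMeasure_map (μ := (ν : Measure Y)) hT.aemeasurable
  refine ⟨hT.measurable, ext_of_forall_integral_eq_of_IsFiniteMeasure fun h => ?_⟩
  rw [integral_map hT.aemeasurable h.continuous.aestronglyMeasurable]
  have hlim := ProbabilityMeasure.tendsto_iff_forall_integral_tendsto.1 hν
  simp only [hP, integral_empiricalMeasure] at hlim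
  have hcomp (i : ι) : birkhoffAverage ℝ T (h.compContinuous ⟨T, hT⟩) (N i) (x i) =
      birkhoffAverage ℝ T h (N i) (T (x i)) := by
    simp [birkhoffAverage, birkhoffSum, Function.Commute.iterate_self T _ |>.eq]
  have hdiff := tendsto_birkhoffAverage_apply_sub_birkhoffAverage_of_norm_le
    (T := T) h.norm_coe_le_norm hN x
  simp only [← hcomp] at hdiff
  exact sub_eq_zero.1 <|
    tendsto_nhds_unique ((hlim (h.compContinuous ⟨T, hT⟩)).sub (hlim h)) hdiff

variable [CompactSpace Y] {T : Y → Y} {g : Y → ℝ} {c : ℝ}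

theorem tendstoUniformly_birkhoffAverage_of_forall_integral_eq (hT : Continuous T)
    (hg : Continuous g)
    (hc : ∀ ν : Measure Y, IsProbabilityMeasure ν → MeasurePreserving T ν ν → ∫ y, g y ∂ν = c) :
    TendstoUniformly (birkhoffAverage ℝ T g) (fun _ => c) atTop := by
  rw [← map_add_atTop_eq_nat 1]
  change TendstoUniformly (fun n => birkhoffAverage ℝ T g (n + 1)) (fun _ => c) atTop
  -- The starting point is a coordinate of the filter, so that it may vary with `n`.
  rw [tendstoUniformly_iff_tendsto, ← Uniform.tendsto_nhds_right, tendsto_iff_ultrafilter]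
  intro u hu
  let P (i : ℕ × Y) : ProbabilityMeasure Y := ⟨empiricalMeasure T (i.1 + 1) i.2, inferInstance⟩
  obtain ⟨ν, hν⟩ : ∃ ν, Tendsto P u (𝓝 ν) := ⟨_, (u.map P).le_nhds_lim⟩
  have hfst : Tendsto (fun i : ℕ × Y => i.1 + 1) u atTop :=
    (tendsto_add_atTop_nat 1).comp (tendsto_fst.mono_left hu)
  have hinv : MeasurePreserving T (ν : Measure Y) ν :=
    measurePreserving_of_tendsto_empiricalMeasure hT hfst (fun _ => rfl) hν
  rw [← hc ν inferInstance hinv]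
  have hlim := ProbabilityMeasure.tendsto_iff_forall_integral_tendsto.1 hν (.mkOfCompact ⟨g, hg⟩)
  simp only [P, ProbabilityMeasure.coe_mk, integral_empiricalMeasure] at hlim
  exact hlim

end UniqueErgodicity

section WeightedBirkhoff

theorem iterate_comp_right_apply {Y Z : Type*} [TopologicalSpace Y] [TopologicalSpace Z]
    (T : C(Y, Y)) (k : ℕ) (g : C(Y, Z)) (x : Y) :
    (fun g : C(Y, Z) => g.comp T)^[k] g x = g (T^[k] x) := by
  induction k generalizing g with
  | zero => rfl
  | succ k ih =>
    rw [Function.iterate_succ_apply, ih, Function.iterate_succ_apply', ContinuousMap.comp_apply]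

theorem lipschitzWith_comp_right {Y Z α : Type*} [TopologicalSpace Y] [CompactSpace Y]
    [TopologicalSpace Z] [CompactSpace Z] [PseudoMetricSpace α] (T : C(Y, Z)) :
    LipschitzWith 1 fun g : C(Z, α) => g.comp T :=
  LipschitzWith.of_dist_le_mul fun g g' => by
    rw [NNReal.coe_one, one_mul]
    exact (ContinuousMap.dist_le dist_nonneg).2 fun x => g.dist_apply_le_dist (T x)

theorem IsStronglyRegular.tendstoUniformly_sum_mul_comp_iterate {Y : Type*} [MeasurableSpace Y]
    [TopologicalSpace Y] [T2Space Y] [BorelSpace Y] [HasOuterApproxClosed Y] [CompactSpace Y]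
    {w : ℕ → ℕ → ℝ} {L : ℝ} (hw : IsStronglyRegular w L) {T : Y → Y} (hT : Continuous T)
    {g : Y → ℝ} (hg : Continuous g) {c : ℝ}
    (hc : ∀ ν : Measure Y, IsProbabilityMeasure ν → MeasurePreserving T ν ν → ∫ y, g y ∂ν = c) :
    TendstoUniformly (fun n x => ∑ k ∈ range (n + 1), w n k * g (T^[k] x)) (fun _ => L * c)
      atTop := by
  let U : C(Y, ℝ) →ₗ[ℝ] C(Y, ℝ) := (ContinuousMap.compRightAlgHom ℝ ℝ ⟨T, hT⟩).toLinearMap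
  let G : C(Y, ℝ) := ⟨g, hg⟩
  have hU : LipschitzWith 1 U := lipschitzWith_comp_right ⟨T, hT⟩
  have hfix : Function.IsFixedPt U (.const Y c) := rfl
  have hiter (k : ℕ) (x : Y) : (U^[k] G) x = g (T^[k] x) := iterate_comp_right_apply _ k G x
  have hmean : Tendsto (fun N => birkhoffAverage ℝ U id N G) atTop (𝓝 (.const Y c)) := by
    have h (N : ℕ) : ⇑(birkhoffAverage ℝ U id N G) = birkhoffAverage ℝ T g N := by
      ext x
      simp [birkhoffAverage, birkhoffSum, hiter]
    rw [ContinuousMap.tendsto_iff_tendstoUniformly]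
    simp only [h]
    exact tendstoUniformly_birkhoffAverage_of_forall_integral_eq hT hg hc
  have hweighted := hw.tendsto_sum_smul_iterate hU hfix
    (sub_mem_closure_range_sub_one_of_tendsto_birkhoffAverage hmean)
  have h (n : ℕ) : ⇑(∑ k ∈ range (n + 1), w n k • U^[k] G) =
      fun x => ∑ k ∈ range (n + 1), w n k * g (T^[k] x) := by
    ext x
    simp [hiter]
  rw [ContinuousMap.tendsto_iff_tendstoUniformly] at hweighted
  simp only [h] at hweighted
  exact hweighted

theorem map_map_subtype_val_of_measurePreserving {Y : Type*} [MeasurableSpace Y] {T : Y → Y}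
    {X : Set Y} (hX : MeasurableSet X) (hTX : MapsTo T X X) {ν : Measure X}
    (hν : MeasurePreserving (hTX.restrict T X X) ν ν) :
    Measure.map T (Measure.map (↑) ν) = Measure.map ((↑) : X → Y) ν := by
  have hcomp : T ∘ (↑) = ((↑) : X → Y) ∘ hTX.restrict T X X := rfl
  have hT : AEMeasurable T (Measure.map ((↑) : X → Y) ν) :=
    (MeasurableEmbedding.subtype_coe hX).aemeasurable_map_iff.2
      (measurable_subtype_coe.comp hν.measurable).aemeasurable
  rw [AEMeasurable.map_map_of_aemeasurable hT measurable_subtype_coe.aemeasurable, hcomp,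
    ← Measure.map_map measurable_subtype_coe hν.measurable, hν.map_eq]

theorem weighted_birkhoff_uniquely_ergodic_general {Y : Type*} [TopologicalSpace Y]
    [TopologicalSpace.MetrizableSpace Y] [MeasurableSpace Y] [BorelSpace Y] {T : Y → Y}
    {X : Set Y} (hX : IsCompact X) (hT : ContinuousOn T X) (hTX : MapsTo T X X)
    {f : ℝ → ℝ} (hf : ContinuousOn f (Icc 0 1)) {g : Y → ℝ} (hg : ContinuousOn g X) {c : ℝ}
    (hc : ∀ ν : Measure Y, IsProbabilityMeasure ν → Measure.map T ν = ν → ν Xᶜ = 0 →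
      ∫ y, g y ∂ν = c) :
    TendstoUniformlyOn
      (fun (n : ℕ) (x : Y) => (1 / (n : ℝ)) * ∑ k ∈ range (n + 1), f (k / n) * g (T^[k] x))
      (fun _ => (∫ t in (0 : ℝ)..1, f t) * c) atTop X := by
  have : CompactSpace X := isCompact_iff_compactSpace.1 hX
  have hXm : MeasurableSet X := hX.measurableSet
  have hc' (ν : Measure X) (_ : IsProbabilityMeasure ν)
      (hν : MeasurePreserving (hTX.restrict T X X) ν ν) : ∫ y, g y ∂ν = c := by
    rw [← hc (Measure.map (↑) ν)
      (Measure.isProbabilityMeasure_map measurable_subtype_coe.aemeasurable)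
      (map_map_subtype_val_of_measurePreserving hXm hTX hν)
      (by simp [Measure.map_apply measurable_subtype_coe hXm.compl]),
      (MeasurableEmbedding.subtype_coe hXm).integral_map]
  rw [tendstoUniformlyOn_iff_tendstoUniformly_comp_coe]
  simpa [Function.comp_def, hTX.iterate_restrict, mul_sum, mul_assoc] using
    (isStronglyRegular_inv_mul_natCast_div hf).tendstoUniformly_sum_mul_comp_iterate
      (hT.mapsToRestrict hTX) hg.domRestrict hc'

end WeightedBirkhoff

theorem continuous_shift [TopologicalSpace A] : Continuous (shift : (ℕ → A) → ℕ → A) :=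
  continuous_pi fun n => continuous_apply (n + 1)

/-- (Technical lemma.) For a uniquely ergodic subshift `X` with
invariant measure `μ`, and continuous `f : [0,1] → ℝ`, `g : X → ℝ`, the weighted
Birkhoff averages `(1/n) ∑_{k=0}^n f(k/n) g(σ^k x)` converge to
`(∫_0^1 f)·(∫ g dμ)` uniformly in `x ∈ X`. -/
theorem weighted_birkhoff_uniquely_ergodic
    {A : Type*} [Fintype A] [TopologicalSpace A] [DiscreteTopology A]
    [MeasurableSpace A] [BorelSpace A]
    (X : Set (ℕ → A)) (hXne : X.Nonempty) (hXclosed : IsClosed X)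
    (hXinv : ∀ x ∈ X, shift x ∈ X)
    (μ : Measure (ℕ → A)) [IsProbabilityMeasure μ]
    (hinv : Measure.map shift μ = μ) (hsupp : μ Xᶜ = 0)
    (huniq : ∀ ν : Measure (ℕ → A), IsProbabilityMeasure ν →
      Measure.map shift ν = ν → ν Xᶜ = 0 → ν = μ)
    (f : ℝ → ℝ) (hf : ContinuousOn f (Set.Icc 0 1))
    (g : (ℕ → A) → ℝ) (hg : ContinuousOn g X) :
    TendstoUniformlyOn
      (fun (n : ℕ) (x : ℕ → A) =>
        (1 / (n : ℝ)) * ∑ k ∈ Finset.range (n + 1), f ((k : ℝ) / (n : ℝ)) * g (shift^[k] x))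
      (fun _ => (∫ t in (0:ℝ)..1, f t) * ∫ y, g y ∂μ)
      atTop X :=
  weighted_birkhoff_uniquely_ergodic_general hXclosed.isCompact continuous_shift.continuousOn hXinv
    hf hg fun ν hν hνinv hνX => by rw [huniq ν hν hνinv hνX]
end
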